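/- arXiv:2112.02854 — 3 statements merged into one kernel-verified Lean document; each statement's English description precedes it below -/
import Mathlib

section
/- For each d ≥ 11, there exists no recurrent balanced sequence 𝐯 over an alphabet of d letters with critical exponent E(𝐯) < (d−1)/(d−2). -/
open Filter
open scoped ENNReal

namespace BalancedCE

variable {α : Type*} {β : Type*}

/-- The factor of `v` of length `n` starting at position `i`. -/
def factorAt (v : ℕ → α) (i n : ℕ) : List α := (List.range n).map fun k => v (i + k)

/-- `u` is a factor of the sequence `v`. -/
def IsFactor (v : ℕ → α) (u : List α) : Prop := ∃ i, factorAt v i u.length = u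

/-- The word `w` occurs in the sequence `v` at position `i`. -/
def OccursAt (v : ℕ → α) (w : List α) (i : ℕ) : Prop := factorAt v i w.length = w

/-- A sequence is balanced if counts of each letter in equal-length factors differ by at most 1. -/
def Balanced [DecidableEq α] (v : ℕ → α) : Prop :=
  ∀ (a : α) (u w : List α), IsFactor v u → IsFactor v w → u.length = w.length →
    |(u.count a : ℤ) - (w.count a : ℤ)| ≤ 1

def EventuallyPeriodic (v : ℕ → α) : Prop :=
  ∃ p, 0 < p ∧ ∃ N, ∀ n, N ≤ n → v (n + p) = v n

def Recurrent (v : ℕ → α) : Prop :=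
  ∀ u : List α, IsFactor v u → ∀ N : ℕ, ∃ i, N ≤ i ∧ OccursAt v u i

/-- `i < j` are consecutive occurrences of the letter `a` in `v`. -/
def ConsecOcc (v : ℕ → α) (a : α) (i j : ℕ) : Prop :=
  i < j ∧ v i = a ∧ v j = a ∧ ∀ k, i < k → k < j → v k ≠ a

/-- `p` is a period of the finite word `z` (i.e. `z` is a prefix of `u^ω` with `|u| = p`). -/
def IsPeriod (z : List α) (p : ℕ) : Prop :=
  0 < p ∧ ∀ i, i + p < z.length → z[i]? = z[i + p]?

/-- The minimal period of a finite word. -/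
noncomputable def minPeriod (z : List α) : ℕ := sInf {p | IsPeriod z p}

/-- The exponent of a finite word: its length divided by its minimal period. -/
noncomputable def expE (z : List α) : ℝ≥0∞ := (z.length : ℝ≥0∞) / (minPeriod z : ℝ≥0∞)

/-- The critical exponent of a sequence: the supremum of exponents of nonempty factors. -/
noncomputable def criticalExponent (v : ℕ → α) : ℝ≥0∞ :=
  ⨆ (z : List α) (_ : IsFactor v z ∧ z ≠ []), expE z

/-- A Pansiot sequence over a `d`-letter alphabet. -/
def Pansiot (d : ℕ) (v : ℕ → α) : Prop :=
  (∀ i : ℕ, (factorAt v i (d - 1)).Nodup) ∧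
  ∀ (a : α) (i j : ℕ), ConsecOcc v a i j → v (i + 1) ≠ v (j + 1)

/-- The letter `a` has frequency `ρ` in the sequence `v`. -/
def HasFreq [DecidableEq α] (v : ℕ → α) (a : α) (ρ : ℝ) : Prop :=
  Tendsto (fun n => ((factorAt v 0 n).count a : ℝ) / n) atTop (nhds ρ)

/-- Factor complexity of a sequence. -/
noncomputable def complexity (v : ℕ → α) (n : ℕ) : ℕ :=
  Set.ncard {u : List α | IsFactor v u ∧ u.length = n}

/-- Sturmian sequences: aperiodic binary sequences of factor complexity `n + 1`.
Convention: the letter `a` is `false`, the letter `b` is `true`. -/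
def Sturmian (u : ℕ → Bool) : Prop :=
  ¬ EventuallyPeriodic u ∧ ∀ n, complexity u n = n + 1

/-- Prepending a letter to a sequence. -/
def consSeq (c : α) (v : ℕ → α) : ℕ → α := fun n =>
  match n with
  | 0 => c
  | Nat.succ m => v m

/-- A standard sequence: a Sturmian sequence `u` such that `a·u` and `b·u` are Sturmian. -/
def IsStandard (u : ℕ → Bool) : Prop :=
  Sturmian u ∧ Sturmian (consSeq false u) ∧ Sturmian (consSeq true u)

/-- The slope of a binary sequence, with the convention `ρ_b > ρ_a` (`a = false`, `b = true`). -/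
def HasSlope (u : ℕ → Bool) (θ : ℝ) : Prop :=
  ∃ ρa ρb : ℝ, HasFreq u false ρa ∧ HasFreq u true ρb ∧ ρa < ρb ∧ θ = ρa / ρb

/-- `θ` has the (infinite) continued fraction expansion `[0; a 1, a 2, a 3, …]`:
there are complete quotients' fractional parts `t n ∈ (0,1)` with `t 0 = θ` and
`1 / t n = a (n+1) + t (n+1)` for all `n`. (The value `a 0` is irrelevant.) -/
def HasCF (θ : ℝ) (a : ℕ → ℕ) : Prop :=
  ∃ t : ℕ → ℝ, t 0 = θ ∧ ∀ n, 0 < t n ∧ t n < 1 ∧ 1 / t n = (a (n + 1) : ℝ) + t (n + 1)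

/-- Number of positions `< n` where `u` takes the value `c`. -/
def countBefore (u : ℕ → Bool) (c : Bool) (n : ℕ) : ℕ :=
  ((List.range n).filter fun i => u i = c).length

/-- The colouring of a binary sequence `u` by `y` (on the `a = false` positions)
and `y'` (on the `b = true` positions). -/
def colour (u : ℕ → Bool) (y : ℕ → α) (y' : ℕ → β) : ℕ → α ⊕ β := fun n =>
  if u n = false then Sum.inl (y (countBefore u false n))
  else Sum.inr (y' (countBefore u true n))

/-- A constant gap sequence: periodic, and consecutive occurrences of each occurring
letter are at a constant distance. -/
def ConstantGap (y : ℕ → α) : Prop :=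
  (∃ p, 0 < p ∧ ∀ n, y (n + p) = y n) ∧
  ∀ c : α, (∃ i, y i = c) → ∃ g, 0 < g ∧ ∀ i j, ConsecOcc y c i j → j - i = g

/-- The discolouration (projection) map: letters of the first alphabet go to `a = false`,
letters of the second alphabet go to `b = true`. -/
def proj : α ⊕ β → Bool := Sum.elim (fun _ => false) (fun _ => true)

/-- `v` is a return word to `w` in the sequence `z`. -/
def IsReturnWord (z : ℕ → α) (w v : List α) : Prop :=
  ∃ i j : ℕ, i < j ∧ OccursAt z w i ∧ OccursAt z w j ∧
    (∀ k, i < k → k < j → ¬ OccursAt z w k) ∧ v = factorAt z i (j - i)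

def RightSpecial (z : ℕ → α) (w : List α) : Prop :=
  ∃ a b : α, a ≠ b ∧ IsFactor z (w ++ [a]) ∧ IsFactor z (w ++ [b])

def LeftSpecial (z : ℕ → α) (w : List α) : Prop :=
  ∃ a b : α, a ≠ b ∧ IsFactor z (a :: w) ∧ IsFactor z (b :: w)

def Bispecial (z : ℕ → α) (w : List α) : Prop := LeftSpecial z w ∧ RightSpecial z w

/-- `o` enumerates, in increasing order, all occurrences of `w` in `z`. -/
def IsOccEnum (z : ℕ → α) (w : List α) (o : ℕ → ℕ) : Prop :=
  StrictMono o ∧ (∀ n, OccursAt z w (o n)) ∧ ∀ i, OccursAt z w i → ∃ n, o n = i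

/-- The derived sequence of `z` with respect to the occurrence enumeration `o` of a factor:
its `n`-th letter is the return word between the `n`-th and `(n+1)`-st occurrences. -/
def derivedSeq (z : ℕ → α) (o : ℕ → ℕ) : ℕ → List α :=
  fun n => factorAt z (o n) (o (n + 1) - o n)

/-- The slope of a sequence over a two-letter alphabet:
the ratio of the smaller letter frequency to the larger one. -/
def HasSlope2 {γ : Type*} [DecidableEq γ] (z : ℕ → γ) (θ : ℝ) : Prop :=
  ∃ (c c' : γ) (ρ ρ' : ℝ), c ≠ c' ∧ (∀ n, z n = c ∨ z n = c') ∧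
    HasFreq z c ρ ∧ HasFreq z c' ρ' ∧ ρ < ρ' ∧ θ = ρ / ρ'

/-- The purely cyclic constant gap sequence `(0 1 ⋯ (δ-1))^ω` over `ZMod δ`. -/
def cyc (δ : ℕ) : ℕ → ZMod δ := fun n => (n : ZMod δ)

/-- The colouring `colour(u, (1 2 ⋯ δ)^ω, (1' 2' ⋯ δ')^ω)` over `2δ` letters. -/
def colourCyc (δ : ℕ) (u : ℕ → Bool) : ℕ → ZMod δ ⊕ ZMod δ := colour u (cyc δ) (cyc δ)

/-- No factor of small period: consequence of the bound on the critical exponent. -/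
lemma aux_norep {α : Type*} (v : ℕ → α) (e : ℕ) (he : 10 ≤ e)
    (h : criticalExponent v < ((e : ℕ) : ℝ≥0∞) / ((e - 1 : ℕ) : ℝ≥0∞))
    (s p k : ℕ) (hp : 0 < p) (hpk : p ≤ k * (e - 1)) :
    ¬ ∀ i, i < k → v (s + i + p) = v (s + i) := by
  intro hrep
  apply absurd h
  rw [not_lt]
  have hlen : (factorAt v s (p + k)).length = p + k := by simp [factorAt]
  have hper : IsPeriod (factorAt v s (p + k)) p := by
    refine ⟨hp, ?_⟩
    intro i hi
    rw [hlen] at hi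
    have h1 : i < p + k := by omega
    have h2 := hrep i (by omega)
    simp only [factorAt, List.getElem?_map, List.getElem?_range h1, List.getElem?_range hi,
      Option.map_some]
    rw [← h2, Nat.add_assoc]
  have hmin : minPeriod (factorAt v s (p + k)) ≤ p := Nat.sInf_le hper
  have hpos : 0 < minPeriod (factorAt v s (p + k)) :=
    (Nat.sInf_mem (⟨p, hper⟩ : {q | IsPeriod (factorAt v s (p + k)) q}.Nonempty)).1
  have hle : expE (factorAt v s (p + k)) ≤ criticalExponent v := by
    unfold criticalExponent
    refine le_iSup₂_of_le (factorAt v s (p + k)) ⟨⟨s, ?_⟩, ?_⟩ le_rfl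
    · rw [hlen]
    · intro h0
      rw [h0] at hlen
      simp at hlen
      omega
  refine le_trans ?_ hle
  unfold expE
  rw [hlen]
  generalize minPeriod (factorAt v s (p + k)) = q at hmin hpos
  refine le_trans ?_ (ENNReal.div_le_div_left (Nat.cast_le.mpr hmin) _)
  obtain ⟨c, rfl⟩ : ∃ c, e = c + 1 := ⟨e - 1, by omega⟩
  simp only [Nat.add_sub_cancel] at *
  have hc0 : (c : ℝ≥0∞) ≠ 0 := by
    simp; omega
  have hp0 : (p : ℝ≥0∞) ≠ 0 := by
    simp; omega
  rw [ENNReal.div_le_iff hc0 (ENNReal.natCast_ne_top c), mul_comm, ← mul_div_assoc,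
    ENNReal.le_div_iff_mul_le (Or.inl hp0) (Or.inl (ENNReal.natCast_ne_top p))]
  have : (c + 1) * p ≤ c * (p + k) := by nlinarith
  exact_mod_cast this

/-- Balance: a letter cannot have both a gap `e` and a gap `e + 2`. -/
lemma aux_bal {α : Type*} [DecidableEq α] (v : ℕ → α) (e : ℕ) (he : 10 ≤ e)
    (hbal : Balanced v) (i j : ℕ) (hij : v i = v j) (hi : v (i + e) = v i)
    (hj : ∀ t, t ≤ e → v (j + 1 + t) ≠ v j) : False := by
  have hl : ∀ s n, (factorAt v s n).length = n := by simp [factorAt]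
  have hf : ∀ s n, IsFactor v (factorAt v s n) := fun s n => ⟨s, by rw [hl]⟩
  have h := hbal (v j) _ _ (hf i (e + 1)) (hf (j + 1) (e + 1)) (by rw [hl, hl])
  have h0 : (factorAt v (j + 1) (e + 1)).count (v j) = 0 := by
    rw [List.count_eq_zero]
    intro hm
    simp only [factorAt, List.mem_map, List.mem_range] at hm
    obtain ⟨t, ht, ht2⟩ := hm
    exact hj t (by omega) ht2
  have h2 : 2 ≤ (factorAt v i (e + 1)).count (v j) := by
    obtain ⟨c, rfl⟩ : ∃ c, e = c + 1 := ⟨e - 1, by omega⟩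
    unfold factorAt
    rw [List.range_succ, List.map_append, List.count_append, List.range_succ_eq_map]
    simp [hi, hij]
  rw [h0] at h
  have := abs_le.mp h
  omega

/-- Gap structure facts, abstractly. `X`, `Y`, `Z` at `i`: next occurrence at distance
`e`, `e + 1`, `e + 2`. -/
lemma aux_main {α : Type*} [Fintype α] (v : ℕ → α) (e : ℕ) (he : 10 ≤ e)
    (hcard : Fintype.card α = e + 1)
    (hrep : ∀ s p k, 0 < p → p ≤ k * (e - 1) → ¬ ∀ i, i < k → v (s + i + p) = v (s + i))
    (hb : ∀ i j, v i = v j → v (i + e) = v i → (∀ t, t ≤ e → v (j + 1 + t) ≠ v j) → False) :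
    False := by
  classical
  have F1 : ∀ i j, i < j → j < i + e → v j ≠ v i := by
    intro i j h1 h2 h3
    refine hrep i (j - i) 1 (by omega) (by omega) ?_
    intro t ht
    obtain rfl : t = 0 := by omega
    rw [show i + 0 + (j - i) = j by omega]
    exact h3
  -- windows of length `e + 1`
  have W : ∀ i, v (i + e) ≠ v i → ∀ a, ∃ j, j ≤ e ∧ v (i + j) = a := by
    intro i hi a
    have hinj : Function.Injective (fun t : Fin (e + 1) => v (i + t)) := by
      intro s t hst
      by_contra hne
      have key : ∀ s t : Fin (e + 1), s < t → v (i + s) = v (i + t) → False := by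
        intro s t hlt h
        have h1 : (s : ℕ) < t := hlt
        have h2 := t.2
        by_cases h3 : (t : ℕ) < s + e
        · exact F1 (i + s) (i + t) (by omega) (by omega) h.symm
        · have h4 : (t : ℕ) = e := by omega
          have h5 : (s : ℕ) = 0 := by omega
          rw [h4, h5] at h
          exact hi h.symm
      rcases lt_or_gt_of_ne hne with h | h
      · exact key s t h hst
      · exact key t s h hst.symm
    have hsurj := ((Fintype.bijective_iff_injective_and_card _).2
      ⟨hinj, by rw [Fintype.card_fin, hcard]⟩).2
    obtain ⟨t, ht⟩ := hsurj a
    exact ⟨t, by omega, ht⟩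
  obtain ⟨X, hX⟩ : ∃ X : ℕ → Prop, ∀ i, X i ↔ v (i + e) = v i := ⟨_, fun _ => Iff.rfl⟩
  obtain ⟨Y, hY⟩ : ∃ Y : ℕ → Prop, ∀ i, Y i ↔ v (i + (e + 1)) = v i := ⟨_, fun _ => Iff.rfl⟩
  obtain ⟨Z, hZ⟩ : ∃ Z : ℕ → Prop, ∀ i, Z i ↔ v (i + (e + 2)) = v i := ⟨_, fun _ => Iff.rfl⟩
  have XY : ∀ i, X i → ¬ Y i := by
    intro i h1 h2
    rw [hX] at h1
    rw [hY] at h2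
    exact F1 (i + e) (i + (e + 1)) (by omega) (by omega) (h2.trans h1.symm)
  have XZ : ∀ i, X i → ¬ Z i := by
    intro i h1 h2
    rw [hX] at h1
    rw [hZ] at h2
    exact F1 (i + e) (i + (e + 2)) (by omega) (by omega) (h2.trans h1.symm)
  have YZ : ∀ i, Y i → ¬ Z i := by
    intro i h1 h2
    rw [hY] at h1
    rw [hZ] at h2
    exact F1 (i + (e + 1)) (i + (e + 2)) (by omega) (by omega) (h2.trans h1.symm)
  have XX : ∀ i, X i → ¬ X (i + 1) := by
    intro i h1 h2
    rw [hX] at h1 h2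
    refine hrep i e 2 (by omega) (by omega) ?_
    intro t ht
    interval_cases t
    · exact h1
    · exact h2
  have YY : ∀ i, Y i → ¬ Y (i + 1) := by
    intro i h1 h2
    rw [hY] at h1 h2
    refine hrep i (e + 1) 2 (by omega) (by omega) ?_
    intro t ht
    interval_cases t
    · exact h1
    · exact h2
  have mkY : ∀ i, ¬ X i → ¬ X (i + 1) → Y i := by
    intro i h1 h2
    rw [hX] at h1 h2
    rw [hY]
    obtain ⟨j, hj, hv⟩ := W (i + 1) h2 (v i)
    by_cases h3 : i + 1 + j < i + e
    · exact absurd hv (F1 i _ (by omega) h3)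
    · by_cases h4 : j + 1 = e
      · rw [show i + 1 + j = i + e by omega] at hv
        exact absurd hv h1
      · rwa [show i + 1 + j = i + (e + 1) by omega] at hv
  have mkZ : ∀ i, X (i + 1) → Z i := by
    intro i h1
    have h0 : ¬ X i := fun h => XX i h h1
    have h2 : ¬ X (i + 2) := XX (i + 1) h1
    rw [hX] at h0 h1 h2
    rw [hZ]
    obtain ⟨j, hj, hv⟩ := W (i + 2) h2 (v i)
    by_cases h3 : i + 2 + j < i + e
    · exact absurd hv (F1 i _ (by omega) h3)
    · by_cases h4 : j + 2 = e
      · rw [show i + 2 + j = i + e by omega] at hv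
        exact absurd hv h0
      · by_cases h5 : j + 1 = e
        · rw [show i + 2 + j = i + 1 + e by omega, h1] at hv
          exact absurd hv (F1 i (i + 1) (by omega) (by omega))
        · rwa [show i + 2 + j = i + (e + 2) by omega] at hv
  have tri : ∀ i, X i ∨ Y i ∨ Z i := by
    intro i
    by_cases h1 : X i
    · exact Or.inl h1
    · by_cases h2 : X (i + 1)
      · exact Or.inr (Or.inr (mkZ i h2))
      · exact Or.inr (Or.inl (mkY i h1 h2))
  have ZX : ∀ i, Z i → X (i + 1) := by
    intro i h
    by_contra h2
    exact YZ i (mkY i (fun h3 => XZ i h3 h) h2) h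
  have YZs : ∀ i, Y i → Z (i + 1) := by
    intro i h
    rcases tri (i + 1) with h1 | h1 | h1
    · exact absurd (mkZ i h1) (YZ i h)
    · exact absurd h1 (YY i h)
    · exact h1
  have XYp : ∀ i, Y (i + 1) → X i := by
    intro i h
    rcases tri i with h1 | h1 | h1
    · exact h1
    · exact absurd h (YY i h1)
    · exact absurd h (XY _ (ZX i h1))
  have B : ∀ i j, v i = v j → X i → ¬ Z j := by
    intro i j hij h1 h2
    refine hb i j hij ((hX i).1 h1) ?_
    intro t ht h3
    by_cases h4 : t + 1 < e
    · exact F1 j _ (by omega) (by omega) h3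
    · by_cases h5 : t + 1 = e
      · rw [show j + 1 + t = j + e by omega] at h3
        exact XZ j ((hX j).2 h3) h2
      · rw [show j + 1 + t = j + (e + 1) by omega] at h3
        exact YZ j ((hY j).2 h3) h2
  -- two steps
  have nX : ∀ i, X i → ¬ Z (i + e) := by
    intro i h
    exact B i _ ((hX i).1 h).symm h
  have nZ : ∀ i, Z i → ¬ X (i + (e + 2)) := by
    intro i h h2
    exact B _ i ((hZ i).1 h) h2 h
  have nY : ∀ i, Y (i + 2) → ¬ Y (i + 2 + (e + 1)) := by
    intro i h h2
    have h3 : X (i + (e + 2)) := XYp _ (by rwa [show i + (e + 2) + 1 = i + 2 + (e + 1) by omega])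
    exact nZ i (mkZ i (XYp _ h)) h3
  have stay : ∀ i, Y (i + 2) → Z (i + 2 + (e + 1)) →
      Y (i + 2 + e) ∧ Z (i + 2 + e + (e + 1)) := by
    intro i h1 h2
    have hz : Z i := mkZ i (XYp _ h1)
    have hy : Y (i + 2 + e) := by
      rcases tri (i + 2 + e) with h | h | h
      · exact absurd (by rwa [show i + (e + 2) = i + 2 + e by omega]) (nZ i hz)
      · exact h
      · exact absurd h2 (XZ _ (ZX _ h))
    refine ⟨hy, ?_⟩
    rcases tri (i + 2 + e + (e + 1)) with h | h | h
    · refine absurd hz (B _ i ?_ h)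
      rw [(hY _).1 hy, ← (hZ i).1 hz]
      congr 1; omega
    · refine absurd ?_ (nY (i + e) ?_)
      · rwa [show i + e + 2 + (e + 1) = i + 2 + e + (e + 1) by omega]
      · rwa [show i + e + 2 = i + 2 + e by omega]
    · exact h
  have jump : ∀ i, Y (i + 2) → X (i + 2 + (e + 1)) →
      Y (i + 2 + (e + 2)) ∧ X (i + 2 + (e + 2) + (e + 1)) := by
    intro i h1 h2
    have hx : X (i + 4) := ZX _ (YZs _ h1)
    have hy : Y (i + 2 + (e + 2)) := by
      rcases tri (i + 2 + (e + 2)) with h | h | h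
      · exact absurd h (XX _ h2)
      · exact h
      · exact absurd (by rwa [show i + 4 + e = i + 2 + (e + 2) by omega]) (nX _ hx)
    refine ⟨hy, ?_⟩
    rcases tri (i + 2 + (e + 2) + (e + 1)) with h | h | h
    · exact h
    · refine absurd ?_ (nY (i + (e + 2)) ?_)
      · rwa [show i + (e + 2) + 2 + (e + 1) = i + 2 + (e + 2) + (e + 1) by omega]
      · rwa [show i + (e + 2) + 2 = i + 2 + (e + 2) by omega]
    · refine absurd h (B (i + 4) _ ?_ hx)
      rw [(hY _).1 hy, ← (hX _).1 hx]
      congr 1; omega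
  have stayN : ∀ n i, Y (i + 2) → Z (i + 2 + (e + 1)) →
      Y (i + 2 + n * e) ∧ Z (i + 2 + n * e + (e + 1)) := by
    intro n
    induction n with
    | zero => intro i h1 h2; simpa using ⟨h1, h2⟩
    | succ n ih =>
      intro i h1 h2
      obtain ⟨h3, h4⟩ := ih i h1 h2
      have h5 := stay (i + n * e) (by rwa [show i + n * e + 2 = i + 2 + n * e by omega])
        (by rwa [show i + n * e + 2 = i + 2 + n * e by omega])
      rwa [show i + n * e + 2 + e = i + 2 + (n + 1) * e by ring] at h5
  have jumpN : ∀ n i, Y (i + 2) → X (i + 2 + (e + 1)) →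
      Y (i + 2 + n * (e + 2)) ∧ X (i + 2 + n * (e + 2) + (e + 1)) := by
    intro n
    induction n with
    | zero => intro i h1 h2; simpa using ⟨h1, h2⟩
    | succ n ih =>
      intro i h1 h2
      obtain ⟨h3, h4⟩ := ih i h1 h2
      have h5 := jump (i + n * (e + 2))
        (by rwa [show i + n * (e + 2) + 2 = i + 2 + n * (e + 2) by omega])
        (by rwa [show i + n * (e + 2) + 2 = i + 2 + n * (e + 2) by omega])
      rwa [show i + n * (e + 2) + 2 + (e + 2) = i + 2 + (n + 1) * (e + 2) by ring] at h5
  -- a staying position and a jumping position cannot coexist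
  have nocoex : ∀ i j, Y (i + 2) → Z (i + 2 + (e + 1)) → Y (j + 2) → X (j + 2 + (e + 1)) →
      False := by
    intro i j h1 h2 h3 h4
    have hle : j ≤ i + j * e := by nlinarith
    obtain ⟨n, hn⟩ : ∃ n, i + j * e = j + 2 * n ∨ i + j * e = j + 2 * n + 1 :=
      ⟨(i + j * e - j) / 2, by omega⟩
    obtain ⟨h5, h6⟩ := stayN (j + n) i h1 h2
    obtain ⟨h7, h8⟩ := jumpN n j h3 h4
    rcases hn with hn | hn
    · have : i + 2 + (j + n) * e = j + 2 + n * (e + 2) := by linarith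
      rw [this] at h6
      exact XZ _ h8 h6
    · have : i + 2 + (j + n) * e = j + 2 + n * (e + 2) + 1 := by linarith
      rw [this] at h5
      exact YY _ h7 h5
  -- eventual periodicity of the gaps is impossible
  have fin : ∀ L, 0 < L → (∀ i, X (i + 3) → X (i + 3 + L)) → (∀ i, Y (i + 3) → Y (i + 3 + L)) →
      (∀ i, Z (i + 3) → Z (i + 3 + L)) → False := by
    intro L hL pX pY pZ
    have mul : ∀ P : ℕ → Prop, (∀ i, P (i + 3) → P (i + 3 + L)) →
        ∀ n i, P (i + 3) → P (i + 3 + n * L) := by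
      intro P hP n
      induction n with
      | zero => intro i h; simpa using h
      | succ n ih =>
        intro i h
        have h5 := hP (i + n * L) (by
          have := ih i h
          rwa [show i + n * L + 3 = i + 3 + n * L by omega])
        rwa [show i + n * L + 3 + L = i + 3 + (n + 1) * L by ring] at h5
    obtain ⟨s, t, hst, heq⟩ := Finite.exists_ne_map_eq_of_infinite
      (fun s : ℕ => fun x : Fin (e + 2) => v (s * L + 3 + x))
    wlog hlt : s < t generalizing s t
    · exact this t s hst.symm heq.symm (by omega)
    obtain ⟨c, rfl⟩ : ∃ c, t = s + c := ⟨t - s, by omega⟩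
    have hc : 0 < c := by omega
    have per : ∀ n, v (s * L + 3 + n + c * L) = v (s * L + 3 + n) := by
      intro n
      induction n using Nat.strong_induction_on with
      | _ n ih =>
        by_cases hn : n < e + 2
        · have h := congrFun heq ⟨n, hn⟩
          simp only at h
          rw [h]
          congr 1; ring
        · obtain ⟨q, rfl⟩ : ∃ q, n = q + (e + 2) := ⟨n - (e + 2), by omega⟩
          have hprev : Z (s * L + 3 + q) ∨ Y (s * L + 3 + (q + 1)) ∨ X (s * L + 3 + (q + 2)) := by
            have h0 : ∃ j, j < e + 2 ∧ v (s * L + 3 + q + j) = v (s * L + 3 + (q + (e + 2))) := by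
              by_cases hx : X (s * L + 3 + q)
              · have hx2 := XX _ hx
                rw [hX] at hx2
                obtain ⟨j, hj, hv⟩ := W _ hx2 (v (s * L + 3 + (q + (e + 2))))
                refine ⟨j + 1, by omega, ?_⟩
                rw [← hv]
                congr 1; omega
              · rw [hX] at hx
                obtain ⟨j, hj, hv⟩ := W _ hx (v (s * L + 3 + (q + (e + 2))))
                exact ⟨j, by omega, hv⟩
            obtain ⟨j, hj, hv⟩ := h0
            have hj2 : j ≤ 2 := by
              by_contra hj3
              exact F1 _ _ (by omega) (by omega) hv.symm
            interval_cases j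
            · left
              rw [hZ]
              exact (congrArg v (by omega)).trans hv.symm
            · right; left
              rw [hY]
              exact (congrArg v (by omega)).trans hv.symm
            · right; right
              rw [hX]
              exact (congrArg v (by omega)).trans hv.symm
          rcases hprev with h | h | h
          · have h1 := ih q (by omega)
            have h2 := mul Z pZ c (s * L + q) (by rwa [show s * L + q + 3 = s * L + 3 + q by omega])
            rw [hZ] at h h2
            calc v (s * L + 3 + (q + (e + 2)) + c * L)
                = v (s * L + q + 3 + c * L + (e + 2)) := congrArg v (by omega)
              _ = v (s * L + 3 + q + c * L) := h2.trans (congrArg v (by omega))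
              _ = v (s * L + 3 + q) := h1
              _ = v (s * L + 3 + (q + (e + 2))) := h.symm.trans (congrArg v (by omega))
          · have h1 := ih (q + 1) (by omega)
            have h2 := mul Y pY c (s * L + (q + 1))
              (by rwa [show s * L + (q + 1) + 3 = s * L + 3 + (q + 1) by omega])
            rw [hY] at h h2
            calc v (s * L + 3 + (q + (e + 2)) + c * L)
                = v (s * L + (q + 1) + 3 + c * L + (e + 1)) := congrArg v (by omega)
              _ = v (s * L + 3 + (q + 1) + c * L) := h2.trans (congrArg v (by omega))
              _ = v (s * L + 3 + (q + 1)) := h1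
              _ = v (s * L + 3 + (q + (e + 2))) := h.symm.trans (congrArg v (by omega))
          · have h1 := ih (q + 2) (by omega)
            have h2 := mul X pX c (s * L + (q + 2))
              (by rwa [show s * L + (q + 2) + 3 = s * L + 3 + (q + 2) by omega])
            rw [hX] at h h2
            calc v (s * L + 3 + (q + (e + 2)) + c * L)
                = v (s * L + (q + 2) + 3 + c * L + e) := congrArg v (by omega)
              _ = v (s * L + 3 + (q + 2) + c * L) := h2.trans (congrArg v (by omega))
              _ = v (s * L + 3 + (q + 2)) := h1
              _ = v (s * L + 3 + (q + (e + 2))) := h.symm.trans (congrArg v (by omega))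
    refine hrep (s * L + 3) (c * L) (c * L) (Nat.mul_pos hc hL) ?_ (fun i _ => per i)
    exact Nat.le_mul_of_pos_right _ (by omega)
  by_cases hj : ∃ j, Y (j + 2) ∧ X (j + 2 + (e + 1))
  · obtain ⟨j, hj1, hj2⟩ := hj
    have allJ : ∀ i, Y (i + 2) → X (i + 2 + (e + 1)) := by
      intro i h
      rcases tri (i + 2 + (e + 1)) with h1 | h1 | h1
      · exact h1
      · exact absurd h1 (nY i h)
      · exact (nocoex i j h h1 hj1 hj2).elim
    have pZ : ∀ i, Z i → Z (i + (e + 2)) := by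
      intro i h
      rcases tri (i + (e + 2)) with h1 | h1 | h1
      · exact absurd h1 (nZ i h)
      · have h2 := allJ (i + e) (by rwa [show i + e + 2 = i + (e + 2) by omega])
        refine absurd h (B _ i ?_ h2)
        rw [show i + e + 2 = i + (e + 2) by omega, (hY _).1 h1, (hZ _).1 h]
      · exact h1
    refine fin (e + 2) (by omega) ?_ ?_ (fun i => pZ _)
    · intro i h
      have h2 := ZX _ (pZ _ (mkZ (i + 2) h))
      rwa [show i + 2 + (e + 2) + 1 = i + 3 + (e + 2) by omega] at h2
    · intro i h
      exact (jump (i + 1) h (allJ (i + 1) h)).1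
  · have allS : ∀ i, Y (i + 2) → Z (i + 2 + (e + 1)) := by
      intro i h
      rcases tri (i + 2 + (e + 1)) with h1 | h1 | h1
      · exact absurd ⟨i, h, h1⟩ hj
      · exact absurd h1 (nY i h)
      · exact h1
    have pX : ∀ i, X (i + 2) → X (i + 2 + e) := by
      intro i h
      rcases tri (i + 2 + e) with h1 | h1 | h1
      · exact h1
      · have h2 := allS (i + e) (by rwa [show i + e + 2 = i + 2 + e by omega])
        refine absurd h2 (B (i + 2) _ ?_ h)
        rw [show i + e + 2 = i + 2 + e by omega, (hY _).1 h1, (hX _).1 h]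
      · exact absurd h1 (nX _ h)
    refine fin e (by omega) (fun i => pX (i + 1)) ?_ ?_
    · intro i h
      exact (stay (i + 1) h (allS (i + 1) h)).1
    · intro i h
      apply mkZ
      have h2 := pX (i + 2) (ZX _ h)
      rwa [show i + 2 + 2 + e = i + 3 + e + 1 by omega] at h2

theorem statement5 {α : Type*} [Fintype α] [DecidableEq α] (d : ℕ) (hd : 11 ≤ d)
    (hcard : Fintype.card α = d) (v : ℕ → α)
    (hrec : Recurrent v) (hbal : Balanced v) :
    ¬ (criticalExponent v < ((d - 1 : ℕ) : ℝ≥0∞) / ((d - 2 : ℕ) : ℝ≥0∞)) := by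
  intro h
  obtain ⟨e, rfl⟩ : ∃ e, d = e + 1 := ⟨d - 1, by omega⟩
  have he : 10 ≤ e := by omega
  rw [show e + 1 - 1 = e by omega, show e + 1 - 2 = e - 1 by omega] at h
  exact aux_main v e he hcard (aux_norep v e he h) (aux_bal v e he hbal)

end BalancedCE
end

section
/- For each d ≥ 11, every recurrent balanced sequence 𝐯 over an alphabet of d letters contains a nonempty factor z with exp(z) ≥ (d−1)/(d−2). In particular, E(𝐯) ≥ (d−1)/(d−2), and if E(𝐯) = (d−1)/(d−2), then this supremum is attained by some factor of 𝐯. -/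
open Filter
open scoped ENNReal

namespace BalancedCE

variable {α : Type*} {β : Type*}

theorem prop_case_one {a b c x s t : Prop} (f0 : ¬ a → b) (f1 : ¬ b → c) (s1 : s ↔ ¬ a ∧ b)
    (s2 : t ↔ ¬ b ∧ c) (r1 : s → ¬ x) (r2 : t → x) (r3 : ¬ s → ¬ t → (x ↔ b)) : x ↔ a := by
  tauto

theorem prop_case_two {a b c x s t : Prop} (f0 : a → ¬ b) (f1 : b → ¬ c) (s1 : s ↔ ¬ a ∧ b)
    (s2 : t ↔ ¬ b ∧ c) (r1 : s → ¬ x) (r2 : t → x) (r3 : ¬ s → ¬ t → (x ↔ b)) : x ↔ c := by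
  tauto

theorem factorAt_length (v : ℕ → α) (i n : ℕ) : (factorAt v i n).length = n := by
  simp [factorAt]

/-- A repetition of period `p` and length `m + p` with `p ≤ m * e` has exponent at least
`(e + 1) / e`. -/
theorem exp_of_rep (v : ℕ → α) (e i p m : ℕ) (he : 0 < e) (hp : 0 < p) (hm : p ≤ m * e)
    (h : ∀ k, k < m → v (i + k) = v (i + k + p)) :
    ∃ z : List α, IsFactor v z ∧ z ≠ [] ∧
      ((e + 1 : ℕ) : ℝ≥0∞) / ((e : ℕ) : ℝ≥0∞) ≤ expE z := by
  have hper : IsPeriod (factorAt v i (m + p)) p := by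
    refine ⟨hp, fun k hk => ?_⟩
    rw [factorAt_length] at hk
    have h1 : k < m := by omega
    have h2 : k < m + p := by omega
    simp [factorAt, h2, h1, h k h1, Nat.add_assoc]
  have hne : {q | IsPeriod (factorAt v i (m + p)) q}.Nonempty := ⟨p, hper⟩
  have hle : minPeriod (factorAt v i (m + p)) ≤ p := Nat.sInf_le hper
  refine ⟨factorAt v i (m + p), ⟨i, by rw [factorAt_length]⟩, ?_, ?_⟩
  · intro h0
    have := factorAt_length v i (m + p)
    rw [h0] at this
    simp at this
    omega
  · unfold expE
    rw [factorAt_length]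
    calc ((e + 1 : ℕ) : ℝ≥0∞) / ((e : ℕ) : ℝ≥0∞) ≤ ((m + p : ℕ) : ℝ≥0∞) / (p : ℝ≥0∞) := by
          rw [ENNReal.le_div_iff_mul_le (Or.inl (by exact_mod_cast hp.ne'))
            (Or.inl (ENNReal.natCast_ne_top p)), mul_comm, ← mul_div_assoc]
          apply ENNReal.div_le_of_le_mul
          norm_cast
          nlinarith
      _ ≤ _ := by
          apply ENNReal.div_le_div_left
          exact_mod_cast hle

/-- A sequence obeying the letter-gap rules is eventually periodic (in fact contradictory). -/
theorem no_bad [Fintype α] [DecidableEq α] (e : ℕ) (he : 9 ≤ e)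
    (hcard : Fintype.card α = e + 2) (v : ℕ → α) (hbal : Balanced v)
    (H : ∀ i p m, 0 < p → p ≤ m * e → ¬ ∀ k, k < m → v (i + k) = v (i + k + p)) : False := by
  classical
  -- letters at distance at most `e` are distinct
  have F1 : ∀ i j, i < j → j ≤ i + e → v i ≠ v j := by
    intro i j hij hj heq
    refine H i (j - i) 1 (by omega) (by omega) ?_
    intro k hk
    have : k = 0 := by omega
    subst this
    have : i + 0 + (j - i) = j := by omega
    rw [this]; exact heq
  have R2 : ∀ n p, 0 < p → p ≤ 2 * e → v n = v (n + p) → v (n + 1) = v (n + 1 + p) → False := by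
    intro n p hp hpe h0 h1
    refine H n p 2 hp hpe ?_
    intro k hk
    interval_cases k
    · exact h0
    · exact h1
  -- cardinality: a window of `e + 2` distinct letters is everything
  have cover : ∀ n, v n ≠ v (n + e + 1) → ∀ a, ∃ k, k < e + 2 ∧ v (n + k) = a := by
    intro n hn a
    have hinj : Function.Injective (fun k : Fin (e + 2) => v (n + k)) := by
      have key : ∀ k l : ℕ, k < l → l < e + 2 → v (n + k) ≠ v (n + l) := by
        intro k l hkl hl
        by_cases hc : k = 0 ∧ l = e + 1
        · obtain ⟨rfl, rfl⟩ := hc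
          exact hn
        · exact F1 _ _ (by omega) (by omega)
      intro k l hkl
      rcases lt_trichotomy k.1 l.1 with h | h | h
      · exact absurd hkl (key _ _ h l.2)
      · exact Fin.ext h
      · exact absurd hkl.symm (key _ _ h k.2)
    have hbij := (Fintype.bijective_iff_injective_and_card
      (fun k : Fin (e + 2) => v (n + k))).2 ⟨hinj, by simp [hcard]⟩
    obtain ⟨k, hk⟩ := hbij.2 a
    exact ⟨k, k.2, hk⟩
  obtain ⟨S, hS⟩ : ∃ S : ℕ → Prop, ∀ n, S n ↔ v n = v (n + e + 1) := ⟨_, fun n => Iff.rfl⟩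
  have S11 : ∀ n, S n → ¬ S (n + 1) := by
    intro n h0 h1
    rw [hS] at h0 h1
    exact R2 n (e + 1) (by omega) (by omega) h0 (by rw [h1]; congr 1)
  have G0 : ∀ n, ¬ S n → ¬ S (n + 1) → v (n + e + 2) = v n := by
    intro n h0 h1
    rw [hS] at h0 h1
    obtain ⟨k, hk, hv⟩ := cover n h0 (v (n + e + 2))
    by_cases hk0 : k = 0
    · subst hk0; exact hv.symm
    by_cases hk1 : k = 1
    · subst hk1
      exact absurd (by rw [hv]; congr 1; omega) h1
    · exact absurd hv (F1 _ _ (by omega) (by omega))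
  have G1 : ∀ n, ¬ S n → S (n + 1) → v (n + e + 3) = v n := by
    intro n h0 h1
    have h2 := S11 _ h1
    rw [hS] at h0 h1 h2
    obtain ⟨k, hk, hv⟩ := cover n h0 (v (n + e + 3))
    by_cases hk0 : k = 0
    · subst hk0; exact hv.symm
    by_cases hk1 : k = 1
    · subst hk1
      rw [h1] at hv
      exact absurd hv (F1 _ _ (by omega) (by omega))
    by_cases hk2 : k = 2
    · subst hk2
      exact absurd (by rw [show n + 1 + 1 = n + 2 by omega, hv]; congr 1; omega) h2
    · exact absurd hv (F1 _ _ (by omega) (by omega))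
  have S000 : ∀ n, ¬ S n → ¬ S (n + 1) → S (n + 2) := by
    intro n h0 h1
    by_contra h2
    have a := G0 n h0 h1
    have b := G0 (n + 1) h1 h2
    exact R2 n (e + 2) (by omega) (by omega) (by rw [← a]; congr 1)
      (by rw [← b]; congr 1)
  -- balance
  have F5 : ∀ n m, S n → v m = v n → ¬ S m → ¬ S (m + 1) := by
    intro n m hn hmn hm hm1
    have hg := G1 m hm hm1
    rw [hS] at hn hm hm1
    have hb := hbal (v n) (factorAt v n (e + 2)) (factorAt v (m + 1) (e + 2))
      ⟨n, by rw [factorAt_length]⟩ ⟨m + 1, by rw [factorAt_length]⟩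
      (by rw [factorAt_length, factorAt_length])
    have h0 : (factorAt v (m + 1) (e + 2)).count (v n) = 0 := by
      rw [List.count_eq_zero]
      intro hmem
      simp only [factorAt, List.mem_map, List.mem_range] at hmem
      obtain ⟨k, hk, hkv⟩ := hmem
      rw [← hmn, ← hg] at hkv
      by_cases hk0 : k = 0
      · subst hk0
        rw [hg] at hkv
        exact F1 m (m + 1) (by omega) (by omega) hkv.symm
      by_cases hk1 : k = 1
      · subst hk1
        rw [hg] at hkv
        exact F1 m (m + 1 + 1) (by omega) (by omega) hkv.symm
      · exact F1 _ _ (by omega) (by omega) hkv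
    have h2 : 2 ≤ (factorAt v n (e + 2)).count (v n) := by
      rw [← List.replicate_sublist_iff]
      have : factorAt v n (e + 2) =
          [v n] ++ ((List.range e).map fun k => v (n + (k + 1))) ++ [v n] := by
        unfold factorAt
        rw [List.range_succ, List.map_append, List.range_succ_eq_map, List.map_cons,
          List.map_map]
        simp only [List.map_cons, List.map_nil]
        rw [show n + (e + 1) = n + e + 1 by omega, ← hn]
        rfl
      rw [this]
      have h3 : List.replicate 2 (v n) = [v n] ++ [] ++ [v n] := rfl
      rw [h3]
      exact ((List.Sublist.refl _).append (List.nil_sublist _)).append (List.Sublist.refl _)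
    rw [h0] at hb
    have := (abs_le.1 hb).2
    push_cast at this
    omega
  -- types of letters
  obtain ⟨u, hu⟩ : ∃ u : ℕ → Prop, ∀ n, u n ↔ ∃ m, S m ∧ v n = v m := ⟨_, fun n => Iff.rfl⟩
  have ucong : ∀ i j, v i = v j → (u i ↔ u j) := by
    intro i j h
    rw [hu, hu, h]
  have uS : ∀ n, S n → u n := fun n h => (hu n).2 ⟨n, h, rfl⟩
  have uN : ∀ n, ¬ S n → S (n + 1) → ¬ u n := by
    intro n h0 h1 h
    obtain ⟨m, hm, hv⟩ := (hu n).1 h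
    exact F5 m n hm hv h0 h1
  have Siff : ∀ n, S (n + 1) ↔ (¬ u n ∧ u (n + 1)) := by
    intro n
    constructor
    · intro h
      exact ⟨uN n (fun h' => S11 n h' h) h, uS _ h⟩
    · rintro ⟨h0, h1⟩
      by_contra h
      have hn : ¬ S n := fun h' => h0 (uS _ h')
      exact uN _ h (S000 n hn h) h1
  -- update rules
  have U1 : ∀ n, S (n + 1) → ¬ u (n + 1 + e + 2) := by
    intro n h
    have hn : ¬ S n := fun h' => S11 n h' h
    have := G1 n hn h
    rw [show n + 1 + e + 2 = n + e + 3 by omega, ucong _ _ this]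
    exact uN n hn h
  have U2 : ∀ n, S (n + 1) → u (n + e + 2) := by
    intro n h
    have h' := (hS _).1 h
    rw [show n + e + 2 = n + 1 + e + 1 by omega, ← ucong _ _ h']
    exact uS _ h
  have U3 : ∀ n, ¬ S n → ¬ S (n + 1) → (u (n + e + 2) ↔ u n) := fun n h0 h1 =>
    ucong _ _ (G0 n h0 h1)
  -- every window of length four contains an ascent
  have W : ∀ n, S (n + 1) ∨ S (n + 2) ∨ S (n + 3) := by
    intro n
    by_contra h
    push Not at h
    exact h.2.2 (S000 _ h.1 h.2.1)
  have DA : ∀ n, u n → u (n + 1) → u (n + e + 3) ∧ u (n + e + 3 + 1) := by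
    intro n h0 h1
    have a1 : ¬ S (n + 1) := fun h => ((Siff _).1 h).1 h0
    have a2 : ¬ S (n + 2) := fun h => ((Siff (n + 1)).1 h).1 h1
    have a3 : S (n + 3) := by have := W n; tauto
    refine ⟨?_, ?_⟩
    · have := (U3 (n + 1) a1 a2).2 h1
      rwa [show n + e + 3 = n + 1 + e + 2 by omega]
    · have := U2 (n + 2) a3
      rwa [show n + e + 3 + 1 = n + 2 + e + 2 by omega]
  have DB : ∀ n, ¬ u (n + 2) → ¬ u (n + 3) → ¬ u (n + 2 + e + 1) ∧ ¬ u (n + 2 + e + 1 + 1) := by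
    intro n h0 h1
    have a2 : ¬ S (n + 2) := fun h => h0 (uS _ h)
    have a3 : ¬ S (n + 3) := fun h => h1 (uS _ h)
    have a1 : S (n + 1) := by have := W n; tauto
    refine ⟨?_, ?_⟩
    · have := U1 n a1
      rwa [show n + 2 + e + 1 = n + 1 + e + 2 by omega]
    · have := U3 (n + 2) a2 a3
      rw [show n + 2 + e + 1 + 1 = n + 2 + e + 2 by omega, this]
      exact h0
  have coll : ∀ t n, u n → u (n + 1) → ¬ u (n + 1 + t) → ¬ u (n + 1 + t + 1) → False := by
    intro t
    induction t using Nat.strong_induction_on with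
    | _ t ih =>
      intro n h0 h1 h2 h3
      match t, ih, h2, h3 with
      | 0, _, h2, _ => exact h2 h1
      | 1, _, h2, h3 =>
        rcases W n with h | h | h
        · exact ((Siff _).1 h).1 h0
        · exact ((Siff (n + 1)).1 h).1 h1
        · exact h3 (uS _ h)
      | t + 2, ih, h2, h3 =>
        obtain ⟨p0, p1⟩ := DA n h0 h1
        obtain ⟨q0, q1⟩ := DB (n + 1 + t) h2 h3
        refine ih t (by omega) (n + e + 3) p0 p1 ?_ ?_
        · rwa [show n + e + 3 + 1 + t = n + 1 + t + 2 + e + 1 by omega]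
        · rwa [show n + e + 3 + 1 + t + 1 = n + 1 + t + 2 + e + 1 + 1 by omega]
  -- types are eventually periodic
  have uper : ∃ P N, 0 < P ∧ ∀ n, N ≤ n → (u (n + P) ↔ u n) := by
    by_cases hA : ∃ n, u n ∧ u (n + 1)
    · obtain ⟨n₀, h0, h1⟩ := hA
      have noFF : ∀ m, n₀ + 1 ≤ m → ¬ u m → u (m + 1) := by
        intro m hm h2
        by_contra h3
        obtain ⟨t, rfl⟩ := Nat.exists_eq_add_of_le hm
        exact coll t n₀ h0 h1 h2 h3
      refine ⟨e + 3, n₀ + 1, by omega, fun n hn => ?_⟩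
      have f0 := noFF n hn
      have f1 := noFF (n + 1) (by omega)
      have s1 := Siff n
      have s2 := Siff (n + 1)
      have r1 := U1 n
      have r2 := U2 (n + 1)
      have r3 := U3 (n + 1)
      rw [show n + (e + 3) = n + 1 + e + 2 by omega]
      exact prop_case_one f0 f1 s1 s2 r1 r2 r3
    · refine ⟨e + 1, 2, by omega, fun n hn => ?_⟩
      obtain ⟨k, rfl⟩ := Nat.exists_eq_add_of_le hn
      push Not at hA
      have f0 := hA k
      have f1 := hA (k + 1)
      have s1 := Siff k
      have s2 := Siff (k + 1)
      have r1 := U1 k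
      have r2 := U2 (k + 1)
      have r3 := U3 (k + 1)
      rw [show 2 + k + (e + 1) = k + 1 + e + 2 by omega, show 2 + k = k + 1 + 1 by omega]
      exact prop_case_two f0 f1 s1 s2 r1 r2 r3
  obtain ⟨P, N, hP, hper⟩ := uper
  have Sper : ∀ n, N ≤ n → (S (n + 1 + P) ↔ S (n + 1)) := by
    intro n hn
    rw [show n + 1 + P = (n + P) + 1 by omega, Siff, Siff, hper n hn,
      show n + P + 1 = n + 1 + P by omega, hper (n + 1) (by omega)]
  have Sper' : ∀ t n, N + 1 ≤ n → (S (n + t * P) ↔ S n) := by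
    intro t
    induction t with
    | zero => intro n _; simp
    | succ t ih =>
      intro n hn
      obtain ⟨k, rfl⟩ := Nat.exists_eq_add_of_le hn
      rw [show N + 1 + k + (t + 1) * P = (N + k + t * P) + 1 + P by ring,
        Sper _ (by omega), show N + k + t * P + 1 = N + 1 + k + t * P by ring, ih _ hn]
  -- pigeonhole on windows
  obtain ⟨s, t, hst, hw⟩ : ∃ s t, s < t ∧ ∀ k, k < e + 1 →
      v (N + 1 + s * P + k) = v (N + 1 + t * P + k) := by
    obtain ⟨s, t, hne, heq⟩ := Finite.exists_ne_map_eq_of_infinite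
      (fun s : ℕ => fun k : Fin (e + 1) => v (N + 1 + s * P + k))
    have hw : ∀ k, k < e + 1 → v (N + 1 + s * P + k) = v (N + 1 + t * P + k) :=
      fun k hk => congrFun heq ⟨k, hk⟩
    rcases lt_or_gt_of_ne hne with h | h
    · exact ⟨s, t, h, hw⟩
    · exact ⟨t, s, h, fun k hk => (hw k hk).symm⟩
  have hall : ∀ k, v (N + 1 + s * P + k) = v (N + 1 + t * P + k) := by
    intro k
    induction k using Nat.strong_induction_on with
    | _ k ih =>
      by_cases hk : k < e + 1
      · exact hw k hk
      · obtain ⟨l, rfl⟩ := Nat.exists_eq_add_of_le (not_lt.1 hk)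
        have hSS : S (N + 1 + s * P + l) ↔ S (N + 1 + t * P + l) := by
          rw [show N + 1 + s * P + l = N + 1 + l + s * P by ring,
            show N + 1 + t * P + l = N + 1 + l + t * P by ring,
            Sper' _ _ (by omega), Sper' _ _ (by omega)]
        have e1 : N + 1 + s * P + (e + 1 + l) = N + 1 + s * P + l + e + 1 := by ring
        have e2 : N + 1 + t * P + (e + 1 + l) = N + 1 + t * P + l + e + 1 := by ring
        by_cases hs : S (N + 1 + s * P + l)
        · have ht := hSS.1 hs
          rw [hS] at hs ht
          rw [e1, e2, ← hs, ← ht]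
          exact ih l (by omega)
        · have ht : ¬ S (N + 1 + t * P + l) := fun h => hs (hSS.2 h)
          rw [hS] at hs ht
          obtain ⟨k, hk, hv⟩ := cover _ ht (v (N + 1 + s * P + (e + 1 + l)))
          by_cases hk1 : k = e + 1
          · rw [← hv, hk1]
            congr 1
            ring
          · exfalso
            rw [show N + 1 + t * P + l + k = N + 1 + t * P + (l + k) by ring,
              ← ih (l + k) (by omega)] at hv
            by_cases hk0 : k = 0
            · subst hk0
              rw [e1] at hv
              exact hs hv
            · exact F1 _ _ (by omega) (by omega) hv
  have hlt : s * P < t * P := Nat.mul_lt_mul_of_pos_right hst hP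
  refine H (N + 1 + s * P) (t * P - s * P) (t * P - s * P) (by omega) ?_ ?_
  · exact Nat.le_mul_of_pos_right _ (by omega)
  · intro k _
    rw [hall k]
    congr 1
    omega

theorem statement6 {α : Type*} [Fintype α] [DecidableEq α] (d : ℕ) (hd : 11 ≤ d)
    (hcard : Fintype.card α = d) (v : ℕ → α)
    (hrec : Recurrent v) (hbal : Balanced v) :
    (∃ z : List α, IsFactor v z ∧ z ≠ [] ∧
      ((d - 1 : ℕ) : ℝ≥0∞) / ((d - 2 : ℕ) : ℝ≥0∞) ≤ expE z) ∧
    ((d - 1 : ℕ) : ℝ≥0∞) / ((d - 2 : ℕ) : ℝ≥0∞) ≤ criticalExponent v ∧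
    (criticalExponent v = ((d - 1 : ℕ) : ℝ≥0∞) / ((d - 2 : ℕ) : ℝ≥0∞) →
      ∃ z : List α, IsFactor v z ∧ z ≠ [] ∧ expE z = criticalExponent v) := by
  obtain ⟨e, rfl⟩ : ∃ e, d = e + 2 := ⟨d - 2, by omega⟩
  rw [show e + 2 - 1 = e + 1 by omega, show e + 2 - 2 = e by omega]
  have main : ∃ z : List α, IsFactor v z ∧ z ≠ [] ∧
      ((e + 1 : ℕ) : ℝ≥0∞) / ((e : ℕ) : ℝ≥0∞) ≤ expE z := by
    by_contra hno
    refine no_bad e (by omega) hcard v hbal ?_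
    intro i p m hp hm h
    exact hno (exp_of_rep v e i p m (by omega) hp hm h)
  have hle : ∀ z : List α, IsFactor v z → z ≠ [] → expE z ≤ criticalExponent v := by
    intro z hz hz0
    exact le_iSup₂ (f := fun (z : List α) (_ : IsFactor v z ∧ z ≠ []) => expE z) z ⟨hz, hz0⟩
  refine ⟨main, ?_, ?_⟩
  · obtain ⟨z, hz, hz0, h⟩ := main
    exact h.trans (hle z hz hz0)
  · intro hc
    obtain ⟨z, hz, hz0, h⟩ := main
    exact ⟨z, hz, hz0, le_antisymm (hle z hz hz0) (hc ▸ h)⟩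

end BalancedCE
end

section
/- Let 𝐯 = colour(𝐮, 𝐲, 𝐲′), where 𝐮 is a Sturmian sequence over {a, b} and 𝐲, 𝐲′ are constant gap sequences over two disjoint alphabets. Then every letter c occurring in 𝐲 has frequency ρ_c(𝐯) = ρ_a(𝐮)/gap_𝐲(c) in 𝐯, and every letter c′ occurring in 𝐲′ has frequency ρ_{c′}(𝐯) = ρ_b(𝐮)/gap_{𝐲′}(c′) in 𝐯. Consequently, every letter frequency of a recurrent aperiodic balanced sequence over a finite alphabet exists and is irrational. -/
open Filter
open scoped ENNReal

namespace BalancedCE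

variable {α : Type*} {β : Type*}

/-- Number of occurrences of `a` in the factor of length `n` at position `i`. -/
def cnt [DecidableEq α] (v : ℕ → α) (a : α) (i n : ℕ) : ℕ := (factorAt v i n).count a

lemma cnt_zero [DecidableEq α] (v : ℕ → α) (a : α) (i : ℕ) : cnt v a i 0 = 0 := by
  simp [cnt, factorAt]

lemma cnt_succ [DecidableEq α] (v : ℕ → α) (a : α) (i n : ℕ) :
    cnt v a i (n + 1) = cnt v a i n + if v (i + n) = a then 1 else 0 := by
  simp [cnt, factorAt, List.range_succ, List.count_append, List.count_singleton]

lemma cnt_add [DecidableEq α] (v : ℕ → α) (a : α) (i m n : ℕ) :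
    cnt v a i (m + n) = cnt v a i m + cnt v a (i + m) n := by
  induction n with
  | zero => simp [cnt_zero]
  | succ n ih => rw [← add_assoc, cnt_succ, cnt_succ, ih, add_assoc, add_assoc i m n]

lemma cnt_le [DecidableEq α] (v : ℕ → α) (a : α) (i n : ℕ) : cnt v a i n ≤ n := by
  induction n with
  | zero => simp [cnt_zero]
  | succ n ih => rw [cnt_succ]; split_ifs <;> omega

lemma countBefore_eq (u : ℕ → Bool) (c : Bool) (n : ℕ) : countBefore u c n = cnt u c 0 n := by
  induction n with
  | zero => simp [countBefore, cnt_zero]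
  | succ n ih =>
    rw [cnt_succ, ← ih]
    by_cases h : u n = c <;> simp [countBefore, List.range_succ, h]

lemma cnt_colour_inl [DecidableEq α] [DecidableEq β] (u : ℕ → Bool) (y : ℕ → α) (y' : ℕ → β)
    (c : α) (n : ℕ) :
    cnt (colour u y y') (Sum.inl c) 0 n = cnt y c 0 (cnt u false 0 n) := by
  induction n with
  | zero => simp [cnt_zero]
  | succ n ih =>
    rw [cnt_succ, cnt_succ u, ih]
    by_cases h : u n = false
    · simp [colour, h, cnt_succ, countBefore_eq]
    · simp [colour, h]

lemma cnt_colour_inr [DecidableEq α] [DecidableEq β] (u : ℕ → Bool) (y : ℕ → α) (y' : ℕ → β)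
    (c : β) (n : ℕ) :
    cnt (colour u y y') (Sum.inr c) 0 n = cnt y' c 0 (cnt u true 0 n) := by
  induction n with
  | zero => simp [cnt_zero]
  | succ n ih =>
    rw [cnt_succ, cnt_succ u, ih]
    by_cases h : u n = false
    · simp [colour, h]
    · have h' : u n = true := by simpa using h
      simp [colour, h', cnt_succ, countBefore_eq]

/-- In a constant gap sequence the count of a letter deviates boundedly from `n / g`. -/
lemma gap_count [DecidableEq α] (y : ℕ → α) (hy : ConstantGap y) (c : α) (g : ℕ)
    (hc : ∃ i, y i = c) (hg : ∀ i j : ℕ, ConsecOcc y c i j → j - i = g) :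
    ∃ K : ℕ, ∀ n, |(cnt y c 0 n : ℝ) * g - n| ≤ K := by
  obtain ⟨⟨p, hp, hper⟩, -⟩ := hy
  have hinf : ∀ n, ∃ m, n ≤ m ∧ y m = c := by
    obtain ⟨i, hi⟩ := hc
    intro n
    have hk : ∀ k, y (i + k * p) = c := by
      intro k
      induction k with
      | zero => simpa using hi
      | succ k ih => rw [show i + (k + 1) * p = i + k * p + p by ring, hper, ih]
    exact ⟨i + n * p, by nlinarith, hk n⟩
  classical
  let i0 := Nat.find hc
  have hi0 : y i0 = c := Nat.find_spec hc
  have hmin : ∀ k < i0, y k ≠ c := fun k hk => Nat.find_min hc hk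
  have hzero : ∀ n ≤ i0, cnt y c 0 n = 0 := by
    intro n
    induction n with
    | zero => simp [cnt_zero]
    | succ n ih =>
      intro hn
      rw [cnt_succ, ih (by omega)]
      simp [hmin n (by omega)]
  have key : ∀ n, i0 + 1 ≤ n → ∃ l k, l < n ∧ n ≤ l + g ∧ y l = c ∧
      (∀ j, l < j → j < n → y j ≠ c) ∧ cnt y c 0 n = k + 1 ∧ l = i0 + k * g := by
    have hgap : ∀ l n, l < n → y l = c → (∀ j, l < j → j < n → y j ≠ c) → n ≤ l + g := by
      intro l n hln hl hj
      have hex := hinf n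
      have h1 := Nat.find_spec hex
      have := hg l (Nat.find hex) ⟨by omega, hl, h1.2, by
        intro k hk1 hk2 hk3
        by_cases hkn : k < n
        · exact hj k hk1 hkn hk3
        · exact Nat.find_min hex hk2 ⟨by omega, hk3⟩⟩
      omega
    intro n hn
    induction n, hn using Nat.le_induction with
    | base =>
      refine ⟨i0, 0, by omega, hgap _ _ (by omega) hi0 (by intro j; omega), hi0,
        by intro j; omega, ?_, by simp⟩
      rw [cnt_succ, hzero i0 le_rfl]; simp [hi0]
    | succ n hn ih =>
      obtain ⟨l, k, h1, h2, h3, h4, h5, h6⟩ := ih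
      by_cases h : y n = c
      · have := hg l n ⟨h1, h3, h, h4⟩
        refine ⟨n, k + 1, by omega, hgap _ _ (by omega) h (by intro j; omega), h,
          by intro j; omega, ?_, ?_⟩
        · rw [cnt_succ, h5]; simp [h]
        · rw [add_mul]; omega
      · have h4' : ∀ j, l < j → j < n + 1 → y j ≠ c := by
          intro j hj1 hj2
          rcases Nat.lt_succ_iff_lt_or_eq.1 hj2 with hj | rfl
          · exact h4 j hj1 hj
          · exact h
        refine ⟨l, k, by omega, hgap _ _ (by omega) h3 h4', h3, h4', ?_, h6⟩
        rw [cnt_succ, h5]; simp [h]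
  refine ⟨i0 + g, fun n => ?_⟩
  by_cases hn : n ≤ i0
  · rw [hzero n hn]
    have : (n : ℝ) ≤ i0 := by exact_mod_cast hn
    simp
    linarith [Nat.cast_nonneg (α := ℝ) g]
  · obtain ⟨l, k, h1, h2, h3, h4, h5, h6⟩ := key n (by omega)
    rw [h5]
    have e1 : ((l : ℕ) : ℝ) = i0 + k * g := by exact_mod_cast h6
    have e2 : (l : ℝ) < n := by exact_mod_cast h1
    have e3 : (n : ℝ) ≤ l + g := by exact_mod_cast h2
    have e4 := Nat.cast_nonneg (α := ℝ) g
    have e5 := Nat.cast_nonneg (α := ℝ) i0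
    push_cast
    rw [abs_le]
    constructor <;> nlinarith

lemma freq_aux (C A : ℕ → ℕ) (g K : ℕ) (hg : 0 < g) (ρ : ℝ)
    (h : ∀ n, |(C n : ℝ) * g - A n| ≤ K)
    (hA : Tendsto (fun n => (A n : ℝ) / n) atTop (nhds ρ)) :
    Tendsto (fun n => (C n : ℝ) / n) atTop (nhds (ρ / g)) := by
  have hg' : (0 : ℝ) < g := by exact_mod_cast hg
  have hz : Tendsto (fun n : ℕ => ((C n : ℝ) * g - A n) / n) atTop (nhds 0) := by
    refine squeeze_zero_norm (a := fun n : ℕ => (K : ℝ) / n) ?_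
      (tendsto_const_div_atTop_nhds_zero_nat _)
    intro n
    rw [norm_div, Real.norm_eq_abs, Real.norm_natCast]
    gcongr
    exact h n
  have := (hA.add hz).div_const (g : ℝ)
  rw [add_zero] at this
  refine this.congr fun n => ?_
  field_simp
  ring

/-- The balance property of a single letter. -/
def BalL [DecidableEq α] (v : ℕ → α) (a : α) : Prop :=
  ∀ i j n, cnt v a i n ≤ cnt v a j n + 1

lemma Balanced.balL [DecidableEq α] {v : ℕ → α} (h : Balanced v) (a : α) : BalL v a := by
  intro i j n
  have hl : ∀ i, (factorAt v i n).length = n := by intro i; simp [factorAt]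
  have := h a (factorAt v i n) (factorAt v j n) ⟨i, by rw [hl]⟩ ⟨j, by rw [hl]⟩ (by simp [hl])
  rw [abs_le] at this
  simp only [cnt]
  omega

lemma BalL.exists_freq [DecidableEq α] {v : ℕ → α} {a : α} (h : BalL v a) :
    ∃ ρ : ℝ, HasFreq v a ρ := by
  have hs : Subadditive (fun n => (cnt v a 0 n : ℝ) + 1) := by
    intro m n
    have h1 := cnt_add v a 0 m n
    have h2 := h (0 + m) 0 n
    have : cnt v a 0 (m + n) ≤ cnt v a 0 m + cnt v a 0 n + 1 := by omega
    have : (cnt v a 0 (m + n) : ℝ) ≤ cnt v a 0 m + cnt v a 0 n + 1 := by exact_mod_cast this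
    linarith
  have hb : BddBelow (Set.range fun n : ℕ => ((cnt v a 0 n : ℝ) + 1) / n) := by
    refine ⟨0, ?_⟩
    rintro _ ⟨n, rfl⟩
    positivity
  refine ⟨hs.lim, ?_⟩
  have h1 := hs.tendsto_lim hb
  have h2 := h1.sub (tendsto_const_div_atTop_nhds_zero_nat (1 : ℝ))
  rw [sub_zero] at h2
  refine h2.congr fun n => ?_
  simp only [cnt]
  ring

lemma BalL.dev [DecidableEq α] {v : ℕ → α} {a : α} (h : BalL v a) {ρ : ℝ}
    (hρ : HasFreq v a ρ) (m n : ℕ) : |(cnt v a m n : ℝ) - n * ρ| ≤ 1 := by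
  rcases Nat.eq_zero_or_pos n with rfl | hn
  · simp [cnt_zero]
  have hk : ∀ k : ℕ, cnt v a 0 (k * n) ≤ k * cnt v a m n + k ∧
      k * cnt v a m n ≤ cnt v a 0 (k * n) + k := by
    intro k
    induction k with
    | zero => simp [cnt_zero]
    | succ k ih =>
      have h1 := cnt_add v a 0 (k * n) n
      have h2 := h (0 + k * n) m n
      have h3 := h m (0 + k * n) n
      rw [add_mul, one_mul, h1, add_mul, one_mul]
      omega
  have hn' : (0 : ℝ) < n := by exact_mod_cast hn
  have ht : Tendsto (fun k : ℕ => (cnt v a 0 (k * n) : ℝ) / k) atTop (nhds (n * ρ)) := by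
    have h0 : Tendsto (fun k : ℕ => k * n) atTop atTop :=
      tendsto_id.atTop_mul_const' hn
    have h1 := (Tendsto.comp hρ h0).const_mul (n : ℝ)
    refine h1.congr fun k => ?_
    simp only [Function.comp, cnt]
    push_cast
    field_simp
  have ht2 := (ht.const_sub (cnt v a m n : ℝ)).abs
  refine le_of_tendsto ht2 ?_
  filter_upwards [eventually_gt_atTop 0] with k hk0
  have hk' : (0 : ℝ) < k := by exact_mod_cast hk0
  obtain ⟨e1, e2⟩ := hk k
  have e1' : (cnt v a 0 (k * n) : ℝ) ≤ k * cnt v a m n + k := by exact_mod_cast e1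
  have e2' : (k : ℝ) * cnt v a m n ≤ cnt v a 0 (k * n) + k := by exact_mod_cast e2
  rw [abs_le]
  constructor
  · have : (cnt v a 0 (k * n) : ℝ) / k ≤ cnt v a m n + 1 := by
      rw [div_le_iff₀ hk']; linarith
    linarith
  · have : (cnt v a m n : ℝ) - 1 ≤ (cnt v a 0 (k * n) : ℝ) / k := by
      rw [le_div_iff₀ hk']; linarith
    linarith

lemma eventually_zero (D : ℕ → ℤ) (q : ℕ) (hq : 0 < q) (hD : ∀ n, 0 ≤ D n)
    (hs : ∀ m k, ∑ j ∈ Finset.range k, D (m + j * q) ≤ 1) :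
    ∃ N, ∀ n, N ≤ n → D n = 0 := by
  have h1 : ∀ r, ∃ N, ∀ j, N ≤ j → D (r + j * q) = 0 := by
    intro r
    by_cases hr : ∀ j, D (r + j * q) = 0
    · exact ⟨0, fun j _ => hr j⟩
    · push Not at hr
      obtain ⟨j0, hj0⟩ := hr
      refine ⟨j0 + 1, fun j hj => ?_⟩
      by_contra hne
      have a1 := hD (r + j0 * q)
      have a2 := hD (r + j * q)
      have h2 := hs r (j + 1)
      rw [Finset.sum_range_succ] at h2
      have h3 := Finset.single_le_sum (f := fun j => D (r + j * q)) (s := Finset.range j)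
        (fun i _ => hD _) (Finset.mem_range.2 (show j0 < j by omega))
      omega
  choose N hN using h1
  refine ⟨q * ∑ r ∈ Finset.range q, N r, fun n hn => ?_⟩
  have h2 : N (n % q) ≤ n / q := by
    have h3 := Finset.single_le_sum (f := N) (s := Finset.range q)
        (fun i _ => Nat.zero_le _) (Finset.mem_range.2 (Nat.mod_lt n hq))
    rw [Nat.le_div_iff_mul_le hq]
    nlinarith
  have := hN _ _ h2
  rwa [Nat.mod_add_div'] at this

/-- A letter with rational frequency is eventually periodic. -/
lemma BalL.rational [DecidableEq α] {v : ℕ → α} {a : α} (h : BalL v a) {ρ : ℝ}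
    (hρ : HasFreq v a ρ) (hr : ¬ Irrational ρ) :
    ∃ q, 0 < q ∧ ∃ N, ∀ n, N ≤ n → (v (n + q) = a ↔ v n = a) := by
  obtain ⟨r, rfl⟩ : ∃ r : ℚ, (r : ℝ) = ρ := by simpa [Irrational] using hr
  set q := r.den with hq
  have hq0 : 0 < q := r.den_pos
  have hq0' : (0 : ℝ) < q := by exact_mod_cast hq0
  have hdev : ∀ m k : ℕ, |(cnt v a m (k * q) : ℤ) - k * r.num| ≤ 1 := by
    intro m k
    have := h.dev hρ m (k * q)
    have e : ((k * q : ℕ) : ℝ) * (r : ℝ) = k * r.num := by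
      rw [Rat.cast_def, ← hq]; push_cast; field_simp
    rw [e] at this
    exact_mod_cast this
  let D : ℕ → ℤ := fun m => (cnt v a m q : ℤ) - r.num
  have hsum : ∀ m k, ∑ j ∈ Finset.range k, D (m + j * q) = cnt v a m (k * q) - k * r.num := by
    intro m k
    induction k with
    | zero => simp [cnt_zero]
    | succ k ih =>
      rw [Finset.sum_range_succ, ih, add_mul, one_mul, cnt_add]
      simp only [D]
      push_cast
      ring
  have hev : ∃ N, ∀ n, N ≤ n → D n = 0 := by
    by_cases hpos : ∀ n, 0 ≤ D n
    · refine eventually_zero D q hq0 hpos fun m k => ?_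
      rw [hsum]
      exact (abs_le.1 (hdev m k)).2
    · push Not at hpos
      obtain ⟨n0, hn0⟩ := hpos
      have hneg : ∀ n, 0 ≤ - D n := by
        intro n
        have := h n n0 q
        simp only [D] at hn0 ⊢
        omega
      obtain ⟨N, hN⟩ := eventually_zero (fun n => - D n) q hq0 hneg fun m k => by
        rw [Finset.sum_neg_distrib, hsum]
        have := (abs_le.1 (hdev m k)).1
        linarith
      exact ⟨N, fun n hn => by have := hN n hn; simpa using this⟩
  obtain ⟨N, hN⟩ := hev
  refine ⟨q, hq0, N, fun n hn => ?_⟩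
  have h1 := hN n hn
  have h2 := hN (n + 1) (by omega)
  have h3 := cnt_succ v a n q
  have h4 := cnt_add v a n 1 q
  have h5 := cnt_succ v a n 0
  rw [cnt_zero] at h5
  rw [add_comm 1 q] at h4
  simp only [D] at h1 h2
  simp only [add_zero, zero_add] at h5
  by_cases c1 : v (n + q) = a <;> by_cases c2 : v n = a <;> simp [c1, c2] at h3 h5 ⊢ <;> omega

lemma dense_nat (θ : ℝ) (hθ : Irrational θ) (a b : ℝ) (hab : a < b) :
    ∃ (k : ℕ) (z : ℤ), a < k * θ + z ∧ k * θ + z < b := by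
  have hd : DenseRange (fun n : ℕ => n • (θ : AddCircle (1 : ℝ))) :=
    denseRange_zsmul_iff_nsmul.1 (AddCircle.denseRange_zsmul_coe_iff.2 (by simpa using hθ))
  have ho : IsOpen ((fun x : ℝ => (x : AddCircle (1 : ℝ))) '' Set.Ioo a b) :=
    QuotientAddGroup.isOpenMap_coe _ isOpen_Ioo
  obtain ⟨k, x, hx, hk⟩ := hd.exists_mem_open ho ((Set.nonempty_Ioo.2 hab).image _)
  have hk' : (((x - k • θ : ℝ)) : AddCircle (1 : ℝ)) = 0 := by
    rw [AddCircle.coe_sub, AddCircle.coe_nsmul, sub_eq_zero]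
    exact hk
  obtain ⟨z, hz⟩ := (AddCircle.coe_eq_zero_iff (1 : ℝ)).1 hk'
  have hz' : (k : ℝ) * θ + z = x := by
    simp only [zsmul_eq_mul, mul_one, nsmul_eq_mul] at hz
    linarith
  exact ⟨k, z, by rw [hz']; exact hx.1, by rw [hz']; exact hx.2⟩

/-- A letter with irrational frequency occurs in every arithmetic progression. -/
lemma BalL.irrational [DecidableEq α] {v : ℕ → α} {a : α} (h : BalL v a) {ρ : ℝ}
    (hρ : HasFreq v a ρ) (hi : Irrational ρ) (r q : ℕ) (hq : 0 < q) :
    ∃ k : ℕ, v (r + k * q) = a := by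
  have hρ0 : 0 < ρ := by
    refine lt_of_le_of_ne (ge_of_tendsto' hρ fun n => by positivity) ?_
    rintro rfl
    exact hi ⟨0, by simp⟩
  have hρ1 : ρ ≤ 1 := by
    refine le_of_tendsto' hρ fun n => ?_
    have : ((factorAt v 0 n).count a : ℝ) ≤ n := by exact_mod_cast cnt_le v a 0 n
    exact div_le_one_of_le₀ this (by positivity)
  let E : ℕ → ℝ := fun n => cnt v a 0 n - n * ρ
  have hE : ∀ m n, E n ≤ E m + 1 := by
    have : ∀ m n, |E (m + n) - E m| ≤ 1 := by
      intro m n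
      have := h.dev hρ (0 + m) n
      convert this using 2
      simp only [E, cnt_add]
      push_cast
      ring
    intro m n
    rcases le_total m n with hmn | hmn
    · obtain ⟨d, rfl⟩ := Nat.exists_eq_add_of_le hmn
      linarith [(abs_le.1 (this m d)).2]
    · obtain ⟨d, rfl⟩ := Nat.exists_eq_add_of_le hmn
      linarith [(abs_le.1 (this n d)).1]
  have hbdd : BddBelow (Set.range E) := ⟨E 0 - 1, by
    rintro _ ⟨n, rfl⟩; linarith [hE n 0]⟩
  let L := ⨅ n, E n
  have hL : ∀ n, L ≤ E n := fun n => ciInf_le hbdd n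
  have hU : ∀ n, E n ≤ L + 1 := by
    intro n
    have : E n - 1 ≤ L := le_ciInf fun m => by linarith [hE m n]
    linarith
  obtain ⟨k, z, h1, h2⟩ := dense_nat (-(q * ρ)) ((hi.natCast_mul hq.ne').neg)
    (L + r * ρ) (L + r * ρ + ρ) (by linarith)
  refine ⟨k, ?_⟩
  by_contra hne
  have hs := hL (r + k * q + 1)
  have e1 : E (r + k * q + 1) = E (r + k * q) - ρ := by
    simp only [E, cnt_succ, zero_add, hne, if_false]
    push_cast
    ring
  have e2 := hU (r + k * q)
  have e3 := hL (r + k * q)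
  have e4 : E (r + k * q) = cnt v a 0 (r + k * q) - (r + k * q) * ρ := by simp [E]
  set C := cnt v a 0 (r + k * q)
  have g1 : (C : ℤ) < z + 1 := by
    have : (C : ℝ) < z + 1 := by linarith
    exact_mod_cast this
  have g2 : z < (C : ℤ) + 1 := by
    have : (z : ℝ) < C + 1 := by linarith
    exact_mod_cast this
  have g3 : z = C := by omega
  rw [g3] at h1 h2
  push_cast at h1 h2
  linarith

lemma third {γ : Type} [Fintype γ] [DecidableEq γ] (w : ℕ → γ)
    (hr : Recurrent w) (hp : ¬ EventuallyPeriodic w) (hb : Balanced w)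
    (c : γ) (hc : ∃ i, w i = c) : ∃ ρ : ℝ, HasFreq w c ρ ∧ Irrational ρ := by
  obtain ⟨ρ, hρ⟩ := (hb.balL c).exists_freq
  refine ⟨ρ, hρ, ?_⟩
  by_contra hrat
  obtain ⟨q, hq, N, hN⟩ := (hb.balL c).rational hρ hrat
  -- `c` occurs along an arithmetic progression
  obtain ⟨i, hi⟩ := hc
  obtain ⟨r, hrN, hr1⟩ := hr [c] ⟨i, by simp [factorAt, hi]⟩ N
  have hrc : w r = c := by simpa [OccursAt, factorAt] using hr1
  have hprog : ∀ k, w (r + k * q) = c := by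
    intro k
    induction k with
    | zero => simpa using hrc
    | succ k ih =>
      rw [show r + (k + 1) * q = r + k * q + q by ring]
      exact (hN _ (by nlinarith [Nat.zero_le (k * q)])).2 ih
  -- hence all letters have rational frequency
  have hall : ∀ d : γ, ∃ q, 0 < q ∧ ∃ N, ∀ n, N ≤ n → (w (n + q) = d ↔ w n = d) := by
    intro d
    obtain ⟨ρ', hρ'⟩ := (hb.balL d).exists_freq
    refine (hb.balL d).rational hρ' fun hirr => ?_
    obtain ⟨k, hk⟩ := (hb.balL d).irrational hρ' hirr r q hq
    have hcd : c = d := (hprog k).symm.trans hk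
    subst hcd
    exact hrat ((tendsto_nhds_unique hρ hρ') ▸ hirr)
  choose Q hQ M hM using hall
  apply hp
  refine ⟨∏ d, Q d, Finset.prod_pos fun d _ => hQ d, ∑ d, M d, fun n hn => ?_⟩
  have hmul : ∀ d k n, M d ≤ n → (w (n + k * Q d) = d ↔ w n = d) := by
    intro d k n hn
    induction k with
    | zero => simp
    | succ k ih =>
      rw [show n + (k + 1) * Q d = n + k * Q d + Q d by ring, hM d _ (by omega), ih]
  obtain ⟨k, hk⟩ : Q (w n) ∣ ∏ d, Q d := Finset.dvd_prod_of_mem Q (Finset.mem_univ _)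
  have hMn : M (w n) ≤ n :=
    (Finset.single_le_sum (f := M) (fun i _ => Nat.zero_le _) (Finset.mem_univ (w n))).trans hn
  rw [hk, mul_comm]
  exact (hmul (w n) k n hMn).2 rfl

theorem statement8 {α β : Type*} [DecidableEq α] [DecidableEq β]
    (u : ℕ → Bool) (hu : Sturmian u) (y : ℕ → α) (y' : ℕ → β)
    (hy : ConstantGap y) (hy' : ConstantGap y')
    (ρa ρb : ℝ) (hρa : HasFreq u false ρa) (hρb : HasFreq u true ρb) :
    (∀ (c : α) (g : ℕ), 0 < g → (∃ i, y i = c) →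
      (∀ i j : ℕ, ConsecOcc y c i j → j - i = g) →
      HasFreq (colour u y y') (Sum.inl c) (ρa / (g : ℝ))) ∧
    (∀ (c' : β) (g : ℕ), 0 < g → (∃ i, y' i = c') →
      (∀ i j : ℕ, ConsecOcc y' c' i j → j - i = g) →
      HasFreq (colour u y y') (Sum.inr c') (ρb / (g : ℝ))) ∧
    (∀ (γ : Type) [Fintype γ] [DecidableEq γ] (w : ℕ → γ),
      Recurrent w → ¬ EventuallyPeriodic w → Balanced w →
      ∀ c : γ, (∃ i, w i = c) → ∃ ρ : ℝ, HasFreq w c ρ ∧ Irrational ρ) := by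
  refine ⟨?_, ?_, ?_⟩
  · intro c g hg hc hgap
    obtain ⟨K, hK⟩ := gap_count y hy c g hc hgap
    refine freq_aux (fun n => cnt (colour u y y') (Sum.inl c) 0 n)
      (fun n => cnt u false 0 n) g K hg ρa (fun n => ?_) hρa
    rw [cnt_colour_inl]
    exact hK _
  · intro c g hg hc hgap
    obtain ⟨K, hK⟩ := gap_count y' hy' c g hc hgap
    refine freq_aux (fun n => cnt (colour u y y') (Sum.inr c) 0 n)
      (fun n => cnt u true 0 n) g K hg ρb (fun n => ?_) hρb
    rw [cnt_colour_inr]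
    exact hK _
  · intro γ _ _ w hr hp hb c hc
    exact third w hr hp hb c hc


end BalancedCE
end
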